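/- arXiv:2510.21016 — 7 statements merged into one kernel-verified Lean document; each statement's English description precedes it below -/
import Mathlib

section
/- Let n ≥ 1, let c < d be real numbers, and let B : [c,d] → ℂ^{2n×2n} be continuous with B(x) Hermitian for every x. Suppose X : [c,d] → ℂ^{2n×n} is continuously differentiable with J X'(x) = B(x) X(x) for all x ∈ [c,d]. If X(c)* J X(c) = 0, then X(x)* J X(x) = 0 for every x ∈ [c,d]; moreover, the rank of X(x) equals the rank of X(c) for every x ∈ [c,d]. In particular, if X(c) has rank n, then for every x the columns of X(x) span an n-dimensional subspace ℓ(x) of ℂ^{2n} on which u* J v = 0 for all u, v ∈ ℓ(x) (a Lagrangian subspace). -/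
open Matrix

/-- The standard `2n × 2n` complex symplectic matrix `J = [[0, -Iₙ],[Iₙ, 0]]`,
with `ℂ^{2n}` realized as functions on `Fin n ⊕ Fin n`. -/
noncomputable def symJ (n : ℕ) : Matrix (Fin n ⊕ Fin n) (Fin n ⊕ Fin n) ℂ :=
  Matrix.fromBlocks 0 (-1) 1 0

/-!
If `J` is skew-Hermitian and `B` is Hermitian, then `J X' = B X` makes the derivative of `Xᴴ J X`
vanish, so this form is conserved. If moreover `J` is invertible, the equation is the linear system
`X' = J⁻¹ B X`, whose coefficients are bounded; hence, by uniqueness for the initial value problem,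
a solution `X v` vanishing at one point vanishes everywhere. The kernel of `X` is therefore
constant, and so is its rank.
-/

section MatrixCalculus

variable {𝕜 F R m n p : Type*} [NontriviallyNormedField 𝕜] [NormedAddCommGroup F]
  [NormedSpace 𝕜 F] [NormedRing R] [NormedAlgebra 𝕜 R] [Fintype n] [Finite p] {s : Set 𝕜} {x : 𝕜}

lemma hasDerivWithinAt_matrix_iff {A : 𝕜 → Matrix m p F} {A' : Matrix m p F} :
    HasDerivWithinAt A A' s x ↔ ∀ i j, HasDerivWithinAt (fun t => A t i j) (A' i j) s x := by
  have := Fintype.ofFinite p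
  exact hasDerivWithinAt_pi.trans <| forall_congr' fun _ => hasDerivWithinAt_pi

lemma hasDerivWithinAt_matrix_mul {A : 𝕜 → Matrix m n R} {A' : Matrix m n R}
    {C : 𝕜 → Matrix n p R} {C' : Matrix n p R}
    (hA : HasDerivWithinAt A A' s x) (hC : HasDerivWithinAt C C' s x) :
    HasDerivWithinAt (fun t => A t * C t) (A' * C x + A x * C') s x := by
  rw [hasDerivWithinAt_matrix_iff] at hA hC ⊢
  intro i k
  simp only [Matrix.add_apply, Matrix.mul_apply, ← Finset.sum_add_distrib]
  exact .fun_sum fun j _ => (hA i j).fun_mul (hC j k)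

lemma hasDerivWithinAt_matrix_mulVec {A : 𝕜 → Matrix m n R} {A' : Matrix m n R}
    (hA : HasDerivWithinAt A A' s x) (v : n → R) :
    HasDerivWithinAt (fun t => A t *ᵥ v) (A' *ᵥ v) s x := by
  rw [hasDerivWithinAt_matrix_iff] at hA
  exact hasDerivWithinAt_pi.2 fun i => .fun_sum fun j _ => (hA i j).mul_const (v j)

lemma hasDerivWithinAt_conjTranspose [Finite m] [StarRing 𝕜] [TrivialStar 𝕜] [StarAddMonoid F]
    [ContinuousStar F] [StarModule 𝕜 F] {A : 𝕜 → Matrix m p F} {A' : Matrix m p F}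
    (hA : HasDerivWithinAt A A' s x) : HasDerivWithinAt (fun t => (A t)ᴴ) A'ᴴ s x := by
  rw [hasDerivWithinAt_matrix_iff] at hA ⊢
  exact fun i j => (hA j i).star

end MatrixCalculus

section IntervalODE

variable {E : Type*} [NormedAddCommGroup E] [NormedSpace ℝ E] {s : Set ℝ}

lemma eq_of_hasDerivWithinAt_zero_of_ordConnected (hs : s.OrdConnected) {f : ℝ → E}
    (hf : ∀ t ∈ s, HasDerivWithinAt f 0 s t) {x y : ℝ} (hx : x ∈ s) (hy : y ∈ s) :
    f x = f y := by
  have := hs.convex.norm_image_sub_le_of_norm_hasDerivWithin_le hf (fun _ _ => norm_zero.le) hy hx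
  simpa only [zero_mul, norm_le_zero_iff, sub_eq_zero] using this

lemma ODE_solution_unique_of_ordConnected (hs : s.OrdConnected) {v : ℝ → E → E} {K : NNReal}
    (hv : ∀ t ∈ s, LipschitzWith K (v t)) {f g : ℝ → E}
    (hf : ∀ t ∈ s, HasDerivWithinAt f (v t (f t)) s t)
    (hg : ∀ t ∈ s, HasDerivWithinAt g (v t (g t)) s t)
    {x : ℝ} (hx : x ∈ s) (hfg : f x = g x) : Set.EqOn f g s := by
  intro y hy
  have hfc : ContinuousOn f s := fun t ht => (hf t ht).continuousWithinAt
  have hgc : ContinuousOn g s := fun t ht => (hg t ht).continuousWithinAt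
  rcases le_total x y with hxy | hyx
  · have hsub : Set.Icc x y ⊆ s := hs.out hx hy
    have hnhds : ∀ t ∈ Set.Ico x y, s ∈ nhdsWithin t (Set.Ici t) := fun t ht =>
      Filter.mem_of_superset (Icc_mem_nhdsGE_of_mem ht) hsub
    have hmem : ∀ t ∈ Set.Ico x y, t ∈ s := fun t ht => hsub (Set.Ico_subset_Icc_self ht)
    exact ODE_solution_unique_of_mem_Icc_right (s := fun _ => Set.univ)
      (fun t ht => (hv t (hmem t ht)).lipschitzOnWith)
      (hfc.mono hsub) (fun t ht => (hf t (hmem t ht)).mono_of_mem_nhdsWithin (hnhds t ht))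
      (fun _ _ => trivial)
      (hgc.mono hsub) (fun t ht => (hg t (hmem t ht)).mono_of_mem_nhdsWithin (hnhds t ht))
      (fun _ _ => trivial) hfg (Set.right_mem_Icc.2 hxy)
  · have hsub : Set.Icc y x ⊆ s := hs.out hy hx
    have hnhds : ∀ t ∈ Set.Ioc y x, s ∈ nhdsWithin t (Set.Iic t) := fun t ht =>
      Filter.mem_of_superset (Icc_mem_nhdsLE_of_mem ht) hsub
    have hmem : ∀ t ∈ Set.Ioc y x, t ∈ s := fun t ht => hsub (Set.Ioc_subset_Icc_self ht)
    exact ODE_solution_unique_of_mem_Icc_left (s := fun _ => Set.univ)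
      (fun t ht => (hv t (hmem t ht)).lipschitzOnWith)
      (hfc.mono hsub) (fun t ht => (hf t (hmem t ht)).mono_of_mem_nhdsWithin (hnhds t ht))
      (fun _ _ => trivial)
      (hgc.mono hsub) (fun t ht => (hg t (hmem t ht)).mono_of_mem_nhdsWithin (hnhds t ht))
      (fun _ _ => trivial) hfg (Set.left_mem_Icc.2 hyx)

end IntervalODE

section LinearSystem

open scoped Matrix.Norms.Operator

lemma exists_linfty_opNorm_le_of_continuousOn {α F m p : Type*} [TopologicalSpace α]
    [NormedAddCommGroup F] [Fintype m] [Fintype p] {s : Set α} (hs : IsCompact s)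
    {A : α → Matrix m p F} (hA : ∀ i j, ContinuousOn (fun x => A x i j) s) :
    ∃ K, ∀ x ∈ s, ‖A x‖ ≤ K :=
  hs.exists_bound_of_continuousOn <| continuousOn_pi.2 fun i => continuousOn_pi.2 (hA i)

variable {𝕜 m p : Type*} [RCLike 𝕜] [Fintype m] [Fintype p]
  {s : Set ℝ} {A : ℝ → Matrix m m 𝕜} {K : ℝ} {X : ℝ → Matrix m p 𝕜} {x y : ℝ}

lemma mulVec_eq_zero_of_linear_ODE (hs : s.OrdConnected) (hA : ∀ t ∈ s, ‖A t‖ ≤ K)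
    (hX : ∀ t ∈ s, HasDerivWithinAt X (A t * X t) s t) (hx : x ∈ s) (hy : y ∈ s)
    {v : p → 𝕜} (hv : X x *ᵥ v = 0) : X y *ᵥ v = 0 := by
  have hlip : ∀ t ∈ s, LipschitzWith K.toNNReal (A t).mulVecLin := fun t ht =>
    AddMonoidHomClass.lipschitz_of_bound _ K fun w =>
      (linfty_opNorm_mulVec (A t) w).trans (by gcongr; exact hA t ht)
  refine ODE_solution_unique_of_ordConnected (f := fun t => X t *ᵥ v) (g := fun _ => 0)
    hs hlip (fun t ht => ?_) (fun t _ => ?_) hx hv hy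
  · simpa only [mulVecLin_apply, mulVec_mulVec] using hasDerivWithinAt_matrix_mulVec (hX t ht) v
  · simpa only [map_zero] using hasDerivWithinAt_const t s (0 : m → 𝕜)

lemma rank_eq_of_linear_ODE (hs : s.OrdConnected) (hA : ∀ t ∈ s, ‖A t‖ ≤ K)
    (hX : ∀ t ∈ s, HasDerivWithinAt X (A t * X t) s t) (hx : x ∈ s) (hy : y ∈ s) :
    (X x).rank = (X y).rank := by
  have hker : LinearMap.ker (X x).mulVecLin = LinearMap.ker (X y).mulVecLin := by
    ext v
    exact ⟨mulVec_eq_zero_of_linear_ODE hs hA hX hx hy,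
      mulVec_eq_zero_of_linear_ODE hs hA hX hy hx⟩
  have hdimx := (X x).mulVecLin.finrank_range_add_finrank_ker
  have hdimy := (X y).mulVecLin.finrank_range_add_finrank_ker
  rw [hker] at hdimx
  exact Nat.add_right_cancel (hdimx.trans hdimy.symm)

end LinearSystem

lemma conjTranspose_mul_mul_add_eq_zero {R m p q : Type*} [NonUnitalRing R] [StarRing R]
    [Fintype m]
    {J B : Matrix m m R} (hJ : Jᴴ = -J) (hB : B.IsHermitian) {X X' : Matrix m p R}
    {Y Y' : Matrix m q R} (hX : J * X' = B * X) (hY : J * Y' = B * Y) :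
    X'ᴴ * J * Y + Xᴴ * J * Y' = 0 := by
  have hX_star : X'ᴴ * J = -(Xᴴ * B) := by
    have := congrArg conjTranspose hX
    rwa [conjTranspose_mul, conjTranspose_mul, hJ, hB.eq, Matrix.mul_neg, neg_eq_iff_eq_neg] at this
  rw [hX_star, Matrix.mul_assoc Xᴴ, hY, ← Matrix.mul_assoc, Matrix.neg_mul, neg_add_cancel]

lemma conjTranspose_mul_mul_eq_of_hamiltonian_ODE {𝕜 m p q : Type*} [RCLike 𝕜] [Fintype m]
    [Finite p] [Finite q] {s : Set ℝ} (hs : s.OrdConnected)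
    {J : Matrix m m 𝕜} (hJ : Jᴴ = -J) {B : ℝ → Matrix m m 𝕜} (hB : ∀ t ∈ s, (B t).IsHermitian)
    {X X' : ℝ → Matrix m p 𝕜} {Y Y' : ℝ → Matrix m q 𝕜}
    (hX : ∀ t ∈ s, HasDerivWithinAt X (X' t) s t) (hXode : ∀ t ∈ s, J * X' t = B t * X t)
    (hY : ∀ t ∈ s, HasDerivWithinAt Y (Y' t) s t) (hYode : ∀ t ∈ s, J * Y' t = B t * Y t)
    {x y : ℝ} (hx : x ∈ s) (hy : y ∈ s) : (X x)ᴴ * J * Y x = (X y)ᴴ * J * Y y := by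
  have hderiv : ∀ t ∈ s, HasDerivWithinAt (fun t => (X t)ᴴ * J * Y t) 0 s t := fun t ht => by
    have hJ_const : HasDerivWithinAt (fun _ => J) 0 s t :=
      hasDerivWithinAt_matrix_iff.2 fun i j => hasDerivWithinAt_const t s (J i j)
    have hX_star : HasDerivWithinAt (fun t => (X t)ᴴ) (X' t)ᴴ s t :=
      hasDerivWithinAt_conjTranspose (hX t ht)
    have hXJ : HasDerivWithinAt (fun t => (X t)ᴴ * J) ((X' t)ᴴ * J) s t := by
      simpa only [Matrix.mul_zero, add_zero] using
        hasDerivWithinAt_matrix_mul hX_star hJ_const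
    simpa only [conjTranspose_mul_mul_add_eq_zero hJ (hB t ht) (hXode t ht) (hYode t ht)] using
      hasDerivWithinAt_matrix_mul hXJ (hY t ht)
  ext i j
  exact eq_of_hasDerivWithinAt_zero_of_ordConnected hs
    (fun t ht => hasDerivWithinAt_matrix_iff.1 (hderiv t ht) i j) hx hy

lemma star_dotProduct_mulVec_eq_zero_of_mem_range {R m p q : Type*} [CommSemiring R] [StarRing R]
    [Fintype m] [Fintype p] [Fintype q] {J : Matrix m m R} {X : Matrix m p R} {Y : Matrix m q R}
    (h : Xᴴ * J * Y = 0) {u v : m → R} (hu : u ∈ LinearMap.range X.mulVecLin)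
    (hv : v ∈ LinearMap.range Y.mulVecLin) : star u ⬝ᵥ (J *ᵥ v) = 0 := by
  obtain ⟨a, rfl⟩ := hu
  obtain ⟨b, rfl⟩ := hv
  rw [mulVecLin_apply, mulVecLin_apply, star_mulVec, ← dotProduct_mulVec, mulVec_mulVec,
    mulVec_mulVec, h, zero_mulVec, dotProduct_zero]

lemma conjTranspose_symJ (n : ℕ) : (symJ n)ᴴ = -symJ n := by
  simp [symJ, fromBlocks_conjTranspose, fromBlocks_neg]

lemma isUnit_det_symJ (n : ℕ) : IsUnit (symJ n).det :=
  isUnit_det_J (Fin n) ℂ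

open scoped Matrix.Norms.Operator in
theorem lagrangian_frame_propagation_general {𝕜 m p : Type*} [RCLike 𝕜] [Fintype m]
    [DecidableEq m] [Fintype p] {s : Set ℝ} (hs : s.OrdConnected)
    {J : Matrix m m 𝕜} (hJ : Jᴴ = -J) (hJdet : IsUnit J.det)
    {B : ℝ → Matrix m m 𝕜} {K : ℝ} (hBbdd : ∀ t ∈ s, ‖B t‖ ≤ K)
    (hBherm : ∀ t ∈ s, (B t).IsHermitian) {X X' : ℝ → Matrix m p 𝕜}
    (hX : ∀ t ∈ s, HasDerivWithinAt X (X' t) s t) (hode : ∀ t ∈ s, J * X' t = B t * X t)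
    {x y : ℝ} (hx : x ∈ s) (hy : y ∈ s) :
    (X x)ᴴ * J * X x = (X y)ᴴ * J * X y ∧ (X x).rank = (X y).rank := by
  refine ⟨conjTranspose_mul_mul_eq_of_hamiltonian_ODE hs hJ hBherm hX hode hX hode hx hy, ?_⟩
  have hbdd : ∀ t ∈ s, ‖J⁻¹ * B t‖ ≤ ‖J⁻¹‖ * K := fun t ht =>
    (norm_mul_le _ _).trans (by gcongr; exact hBbdd t ht)
  have hX'_eq : ∀ t ∈ s, X' t = J⁻¹ * B t * X t := fun t ht => by
    rw [Matrix.mul_assoc, ← hode t ht, nonsing_inv_mul_cancel_left _ _ hJdet]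
  exact rank_eq_of_linear_ODE hs hbdd (fun t ht => hX'_eq t ht ▸ hX t ht) hx hy

/-- For a `2n × n` matrix solution of `J X' = B(x) X` with `X(c)* J X(c) = 0`, the relation
`X(x)* J X(x) = 0` and the rank of `X(x)` are preserved in `x`; in particular a frame for
a Lagrangian subspace evolves through frames for Lagrangian subspaces. -/
theorem lagrangian_frame_propagation
    (n : ℕ) (hn : 1 ≤ n) (c d : ℝ) (hcd : c < d)
    (B : ℝ → Matrix (Fin n ⊕ Fin n) (Fin n ⊕ Fin n) ℂ)
    (X X' : ℝ → Matrix (Fin n ⊕ Fin n) (Fin n) ℂ)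
    (hBcont : ∀ i j, ContinuousOn (fun x => B x i j) (Set.Icc c d))
    (hBherm : ∀ x ∈ Set.Icc c d, (B x).IsHermitian)
    (hX : ∀ x ∈ Set.Icc c d, ∀ i j,
      HasDerivWithinAt (fun t => X t i j) (X' x i j) (Set.Icc c d) x)
    (hX'cont : ∀ i j, ContinuousOn (fun x => X' x i j) (Set.Icc c d))
    (hode : ∀ x ∈ Set.Icc c d, symJ n * X' x = B x * X x)
    (hiso : (X c)ᴴ * symJ n * X c = 0) :
    (∀ x ∈ Set.Icc c d, (X x)ᴴ * symJ n * X x = 0)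
    ∧ (∀ x ∈ Set.Icc c d, (X x).rank = (X c).rank)
    ∧ ((X c).rank = n →
        ∀ x ∈ Set.Icc c d,
          Module.finrank ℂ (LinearMap.range (X x).mulVecLin) = n
          ∧ ∀ u ∈ LinearMap.range (X x).mulVecLin,
              ∀ v ∈ LinearMap.range (X x).mulVecLin,
                star u ⬝ᵥ (symJ n *ᵥ v) = 0) := by
  obtain ⟨K, hK⟩ := exists_linfty_opNorm_le_of_continuousOn isCompact_Icc hBcont
  have hprop : ∀ x ∈ Set.Icc c d,
      (X x)ᴴ * symJ n * X x = (X c)ᴴ * symJ n * X c ∧ (X x).rank = (X c).rank := fun x hx =>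
    lagrangian_frame_propagation_general Set.ordConnected_Icc (conjTranspose_symJ n)
      (isUnit_det_symJ n) hK hBherm (fun t ht => hasDerivWithinAt_matrix_iff.2 (hX t ht)) hode hx
      (Set.left_mem_Icc.2 hcd.le)
  exact ⟨fun x hx => (hprop x hx).1.trans hiso, fun x hx => (hprop x hx).2,
    fun hrank x hx => ⟨(hprop x hx).2.trans hrank, fun _ hu _ hv =>
      star_dotProduct_mulVec_eq_zero_of_mem_range ((hprop x hx).1.trans hiso) hu hv⟩⟩
end

section
/- Let n ≥ 1, let Φ ∈ ℂ^{2n×2n} satisfy Φᵀ J Φ = J (where Φᵀ is the transpose without conjugation; equivalently conj(Φ)* J Φ = J), and let τ ∈ ℝ with τ ≠ 0. Define 𝒜 := (1/(2τ)) Φ* (J/i) Φ. If v ∈ ℂ^{2n} is nonzero, ν ∈ ℝ, and 𝒜 v = ν v, then ν ≠ 0, the vector J v̄ (where v̄ is the entrywise complex conjugate of v) is nonzero, and 𝒜 (J v̄) = − (1 / ((2τ)² ν)) (J v̄). In other words, if ν is an eigenvalue of 𝒜 with eigenvector v, then −1/((2τ)²ν) is an eigenvalue of 𝒜 with eigenvector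 J v̄. -/
open Matrix

/-!
For symplectic `Φ`, the matrix `M = Φ* J Φ` is itself symplectic, being a product of symplectic
matrices, and it is skew-Hermitian. Symplecticity `M J Mᵀ = J` says that `J` carries an eigenvector
of `Mᵀ` for `κ` to an eigenvector of `M` for `κ⁻¹`, and skew-Hermiticity turns an eigenvector `v` of
`M` for `κ` into the eigenvector `v̄` of `Mᵀ` for `-κ̄`. Niessen's matrix is the multiple
`(2τi)⁻¹ M`.
-/

section CommRing

variable {l R : Type*} [DecidableEq l] [Fintype l] [CommRing R]

theorem J_mulVec_injective : Function.Injective (J l R *ᵥ ·) :=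
  mulVec_injective_of_isUnit ((isUnit_iff_isUnit_det _).mpr (isUnit_det_J l R))

theorem smul_mulVec_J_mulVec_of_transpose_mulVec_eq_smul {A : Matrix (l ⊕ l) (l ⊕ l) R}
    (hA : A ∈ symplecticGroup l R) {w : l ⊕ l → R} {κ : R} (hw : Aᵀ *ᵥ w = κ • w) :
    κ • (A *ᵥ (J l R *ᵥ w)) = J l R *ᵥ w :=
  calc
    κ • (A *ᵥ (J l R *ᵥ w)) = A *ᵥ (J l R *ᵥ (Aᵀ *ᵥ w)) := by rw [hw, mulVec_smul, mulVec_smul]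
    _ = (A * J l R * Aᵀ) *ᵥ w := by simp only [mulVec_mulVec, Matrix.mul_assoc]
    _ = J l R *ᵥ w := by rw [SymplecticGroup.mem_iff.mp hA]

end CommRing

section StarRing

variable {l m R : Type*} [CommRing R] [StarRing R]

theorem transpose_mulVec_star_eq_smul [Fintype m] {A : Matrix m m R} {v : m → R} {κ : R}
    (h : Aᴴ *ᵥ v = κ • v) : Aᵀ *ᵥ star v = star κ • star v := by
  rw [← star_smul, ← h, star_mulVec, conjTranspose_conjTranspose, mulVec_transpose]

variable [DecidableEq l]

theorem J_conjTranspose : (J l R)ᴴ = -J l R := by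
  simp [J, fromBlocks_conjTranspose, fromBlocks_neg]

variable [Fintype l]

theorem conjTranspose_conjTranspose_mul_J_mul (Φ : Matrix (l ⊕ l) m R) :
    (Φᴴ * J l R * Φ)ᴴ = -(Φᴴ * J l R * Φ) := by
  simp only [conjTranspose_mul, conjTranspose_conjTranspose, J_conjTranspose, Matrix.mul_assoc,
    Matrix.neg_mul, Matrix.mul_neg]

theorem conjTranspose_mem_symplecticGroup {A : Matrix (l ⊕ l) (l ⊕ l) R}
    (hA : A ∈ symplecticGroup l R) : Aᴴ ∈ symplecticGroup l R :=
  SymplecticGroup.map_mem (SymplecticGroup.transpose_mem hA) (starRingEnd R)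

theorem conjTranspose_mul_J_mul_mem_symplecticGroup {Φ : Matrix (l ⊕ l) (l ⊕ l) R}
    (hΦ : Φ ∈ symplecticGroup l R) : Φᴴ * J l R * Φ ∈ symplecticGroup l R :=
  mul_mem (mul_mem (conjTranspose_mem_symplecticGroup hΦ) (SymplecticGroup.J_mem l R)) hΦ

theorem J_mulVec_star_ne_zero {v : l ⊕ l → R} (hv : v ≠ 0) : J l R *ᵥ star v ≠ 0 := fun h =>
  hv (star_eq_zero.mp (J_mulVec_injective (h.trans (mulVec_zero _).symm)))

theorem neg_star_smul_mulVec_J_mulVec_star_of_conjTranspose_eq_neg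
    {A : Matrix (l ⊕ l) (l ⊕ l) R} (hA : A ∈ symplecticGroup l R) (hskew : Aᴴ = -A)
    {v : l ⊕ l → R} {κ : R} (heig : A *ᵥ v = κ • v) :
    (-star κ) • (A *ᵥ (J l R *ᵥ star v)) = J l R *ᵥ star v := by
  have hadj : Aᴴ *ᵥ v = (-κ) • v := by rw [hskew, neg_mulVec, heig, neg_smul]
  rw [← star_neg]
  exact smul_mulVec_J_mulVec_of_transpose_mulVec_eq_smul hA (transpose_mulVec_star_eq_smul hadj)

end StarRing

theorem ofReal_neg_one_div_two_mul_sq_mul (τ ν : ℝ) :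
    ((-(1 / ((2 * τ) ^ 2 * ν)) : ℝ) : ℂ) =
      -((1 / (2 * (τ : ℂ)) * Complex.I⁻¹) * star (1 / (2 * (τ : ℂ)) * Complex.I⁻¹)
        / star (ν : ℂ)) := by
  have hstar : star (1 / (2 * (τ : ℂ)) * Complex.I⁻¹) = 1 / (2 * (τ : ℂ)) * Complex.I := by simp
  have hI : Complex.I⁻¹ * Complex.I = 1 := inv_mul_cancel₀ Complex.I_ne_zero
  rw [hstar, mul_mul_mul_comm, hI, mul_one, ← sq, _root_.one_div_pow, div_div]
  simp

theorem niessen_eigenvalue_pairing_general {l K : Type*} [DecidableEq l] [Fintype l] [Field K]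
    [StarRing K] {Φ : Matrix (l ⊕ l) (l ⊕ l) K} (hΦ : Φ ∈ symplecticGroup l K) {c : K} (hc : c ≠ 0)
    {A : Matrix (l ⊕ l) (l ⊕ l) K} (hA : A = c • (Φᴴ * J l K * Φ))
    {v : l ⊕ l → K} (hv : v ≠ 0) {ν : K} (heig : A *ᵥ v = ν • v) :
    ν ≠ 0
    ∧ J l K *ᵥ star v ≠ 0
    ∧ A *ᵥ (J l K *ᵥ star v) = (-(c * star c / star ν)) • (J l K *ᵥ star v) := by
  have hw : J l K *ᵥ star v ≠ 0 := J_mulVec_star_ne_zero hv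
  have hMeig : (Φᴴ * J l K * Φ) *ᵥ v = (c⁻¹ * ν) • v := by
    rw [mul_smul, eq_inv_smul_iff₀ hc, ← smul_mulVec, ← hA, heig]
  have hpair := neg_star_smul_mulVec_J_mulVec_star_of_conjTranspose_eq_neg
    (conjTranspose_mul_J_mul_mem_symplecticGroup hΦ) (conjTranspose_conjTranspose_mul_J_mul Φ) hMeig
  have hν : ν ≠ 0 := by
    rintro rfl
    exact hw (by simpa using hpair.symm)
  have hcoeff : -(c * star c / star ν) * -star (c⁻¹ * ν) = c := by
    have hν' : star ν ≠ 0 := star_ne_zero.mpr hν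
    have hc' : star c ≠ 0 := star_ne_zero.mpr hc
    simp only [star_mul', star_inv₀]
    field_simp
  refine ⟨hν, hw, ?_⟩
  calc
    A *ᵥ (J l K *ᵥ star v) = c • ((Φᴴ * J l K * Φ) *ᵥ (J l K *ᵥ star v)) := by
      rw [hA, smul_mulVec]
    _ = (-(c * star c / star ν)) • ((-star (c⁻¹ * ν)) •
          ((Φᴴ * J l K * Φ) *ᵥ (J l K *ᵥ star v))) := by rw [smul_smul, hcoeff]
    _ = (-(c * star c / star ν)) • (J l K *ᵥ star v) := by rw [hpair]

/-- If `Φᵀ J Φ = J` and `𝒜 = (1/(2τ)) Φ* (J/i) Φ` with `τ ≠ 0` real, then from an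
eigenpair `𝒜 v = ν v` (`ν` real, `v ≠ 0`) one obtains `ν ≠ 0`, `J v̄ ≠ 0`, and
`𝒜 (J v̄) = −(1/((2τ)² ν)) (J v̄)`. -/
theorem niessen_eigenvalue_pairing
    (n : ℕ) (hn : 1 ≤ n)
    (Φ : Matrix (Fin n ⊕ Fin n) (Fin n ⊕ Fin n) ℂ)
    (hΦ : Φᵀ * symJ n * Φ = symJ n)
    (τ : ℝ) (hτ : τ ≠ 0)
    (A : Matrix (Fin n ⊕ Fin n) (Fin n ⊕ Fin n) ℂ)
    (hA : A = (1 / (2 * (τ : ℂ))) • (Φᴴ * (Complex.I⁻¹ • symJ n) * Φ))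
    (v : (Fin n ⊕ Fin n) → ℂ) (hv : v ≠ 0) (ν : ℝ)
    (heig : A *ᵥ v = (ν : ℂ) • v) :
    ν ≠ 0
    ∧ symJ n *ᵥ star v ≠ 0
    ∧ A *ᵥ (symJ n *ᵥ star v)
        = ((-(1 / ((2 * τ) ^ 2 * ν)) : ℝ) : ℂ) • (symJ n *ᵥ star v) := by
  rw [Matrix.mul_smul, Matrix.smul_mul, smul_smul] at hA
  rw [ofReal_neg_one_div_two_mul_sq_mul, ← Complex.ofReal_ne_zero]
  exact niessen_eigenvalue_pairing_general (SymplecticGroup.mem_iff'.mpr hΦ)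
    (by simp [hτ]) hA hv heig
end

section
/- Let F and ν be real numbers with F > 0, ν > 1, and 2F²ν² > 1 + 2F + √(1 + 4F). Then F ν² > ν + 1; equivalently, F ν² / (ν + 1) > 1. -/
/-! The larger root of `F x ^ 2 - x - 1` is `(1 + √(1 + 4 F)) / (2 F)`, and its square is
`(1 + 2 F + √(1 + 4 F)) / (2 F ^ 2)`. The hypothesis on `F` and `ν` therefore says exactly that
`|ν|` lies beyond this root, where the quadratic is positive. -/

theorem quadratic_pos_of_neg_add_sqrt_discrim_lt {a b c x : ℝ} (ha : 0 < a)
    (hx : -b + √(discrim a b c) < 2 * a * x) : 0 < a * x ^ 2 + b * x + c := by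
  have discrim_lt : discrim a b c < (2 * a * x + b) ^ 2 :=
    Real.lt_sq_of_sqrt_lt (by linarith)
  have complete_square :
      4 * a * (a * x ^ 2 + b * x + c) = (2 * a * x + b) ^ 2 - discrim a b c := by
    rw [discrim]
    ring
  refine pos_of_mul_pos_right (a := 4 * a) ?_ (by positivity)
  rw [complete_square]
  exact sub_pos.2 discrim_lt

theorem one_add_sqrt_one_add_four_mul_sq {F : ℝ} (hF : 0 ≤ 1 + 4 * F) :
    (1 + √(1 + 4 * F)) ^ 2 = 2 * (1 + 2 * F + √(1 + 4 * F)) := by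
  rw [add_sq, Real.sq_sqrt hF]
  ring

theorem one_add_sqrt_lt_abs_two_mul_mul {F ν : ℝ} (hF : 0 ≤ 1 + 4 * F)
    (h : 1 + 2 * F + √(1 + 4 * F) < 2 * F ^ 2 * ν ^ 2) :
    1 + √(1 + 4 * F) < |2 * F * ν| := by
  refine (le_abs_self _).trans_lt (sq_lt_sq.1 ?_)
  calc
    (1 + √(1 + 4 * F)) ^ 2 = 2 * (1 + 2 * F + √(1 + 4 * F)) :=
      one_add_sqrt_one_add_four_mul_sq hF
    _ < 2 * (2 * F ^ 2 * ν ^ 2) := by gcongr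
    _ = (2 * F * ν) ^ 2 := by ring

theorem froude_inequality_general {F ν : ℝ} (hF : 0 < F)
    (h : 1 + 2 * F + √(1 + 4 * F) < 2 * F ^ 2 * ν ^ 2) :
    |ν| + 1 < F * ν ^ 2 := by
  have root_lt : 1 + √(1 + 4 * F) < 2 * F * |ν| := by
    simpa only [abs_mul, abs_two, abs_of_pos hF] using
      one_add_sqrt_lt_abs_two_mul_mul (by positivity) h
  have discrim_eq : discrim F (-1) (-1) = 1 + 4 * F := by
    rw [discrim]
    ring
  have quadratic_pos : 0 < F * |ν| ^ 2 + -1 * |ν| + -1 :=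
    quadratic_pos_of_neg_add_sqrt_discrim_lt hF (by rwa [discrim_eq, neg_neg])
  rw [sq_abs] at quadratic_pos
  linarith

/-- For Froude number `F > 0` and `ν > 1` with `2F²ν² > 1 + 2F + √(1 + 4F)`, one has
`Fν² > ν + 1`, equivalently `Fν²/(ν+1) > 1`. -/
theorem froude_inequality
    (F ν : ℝ) (hF : 0 < F) (hν : 1 < ν)
    (h : 1 + 2 * F + Real.sqrt (1 + 4 * F) < 2 * F ^ 2 * ν ^ 2) :
    ν + 1 < F * ν ^ 2 ∧ 1 < F * ν ^ 2 / (ν + 1) := by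
  have key : ν + 1 < F * ν ^ 2 := by linarith [le_abs_self ν, froude_inequality_general hF h]
  exact ⟨key, (one_lt_div (by linarith)).2 key⟩
end

section
/- Let F, ν, H_R be real numbers with 0 < F < 2, ν > 1, H_R > 0, and 2F²ν² > 1 + 2F + √(1 + 4F). Define H_L := ν² H_R, H_s := (F ν² / (ν + 1))^{2/3} H_R, and H_* := ((−ν − 1 + √(8 F² ν⁴ + ν² + 2ν + 1)) / (2(ν + 1))) H_R. Then H_R < H_s < H_* < H_L. -/
/-!
Measured in units of `H_R`, all heights depend on the Froude number `a = F ν² / (ν + 1)` of the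
right state relative to the shock. The sonic height is the critical depth `a ^ (2/3)`, and `H_*` is
the depth conjugate to `1` across a hydraulic jump, i.e. the positive root of `y (y + 1) = 2 a²`.
The condition on `F` and `ν` says exactly that `1 < a`. Hence `t = a ^ (2/3)` satisfies `1 < t` and
`t (t + 1) < 2 t³ = 2 a²`, so it lies below the positive root; and `ν²` lies above the root because
`2 a² < ν² (ν² + 1)` when `F ≤ 2`.
-/

/-- The positive root `y` of Bélanger's equation `y (y + 1) = 2 Fr²`: the ratio of the depths behind
and ahead of a hydraulic jump, where `Fr` is the Froude number, relative to the jump, of the state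
ahead of it. -/
noncomputable def conjugateDepthRatio (Fr : ℝ) : ℝ := (√(1 + 8 * Fr ^ 2) - 1) / 2

theorem lt_conjugateDepthRatio_iff {Fr y : ℝ} (hy : 0 ≤ y) :
    y < conjugateDepthRatio Fr ↔ y * (y + 1) < 2 * Fr ^ 2 := by
  calc y < conjugateDepthRatio Fr
    _ ↔ 2 * y + 1 < √(1 + 8 * Fr ^ 2) := by
      rw [conjugateDepthRatio, lt_div_iff₀ two_pos, lt_sub_iff_add_lt, mul_comm]
    _ ↔ (2 * y + 1) ^ 2 < 1 + 8 * Fr ^ 2 := Real.lt_sqrt (by positivity)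
    _ ↔ y * (y + 1) < 2 * Fr ^ 2 := by constructor <;> intro h <;> linarith

theorem conjugateDepthRatio_lt_iff {Fr y : ℝ} (hy : 0 ≤ y) :
    conjugateDepthRatio Fr < y ↔ 2 * Fr ^ 2 < y * (y + 1) := by
  calc conjugateDepthRatio Fr < y
    _ ↔ √(1 + 8 * Fr ^ 2) < 2 * y + 1 := by
      rw [conjugateDepthRatio, div_lt_iff₀ two_pos, sub_lt_iff_lt_add, mul_comm y]
    _ ↔ 1 + 8 * Fr ^ 2 < (2 * y + 1) ^ 2 := Real.sqrt_lt' (by positivity)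
    _ ↔ 2 * Fr ^ 2 < y * (y + 1) := by constructor <;> intro h <;> linarith

theorem conjugateDepthRatio_div (q : ℝ) {c : ℝ} (hc : 0 < c) :
    conjugateDepthRatio (q / c) = (-c + √(8 * q ^ 2 + c ^ 2)) / (2 * c) := by
  have hsqrt : √(8 * q ^ 2 + c ^ 2) = √(1 + 8 * (q / c) ^ 2) * c := by
    rw [← Real.sqrt_sq hc.le, ← Real.sqrt_mul (by positivity), Real.sqrt_sq hc.le]
    congr 1
    field_simp
    ring
  rw [conjugateDepthRatio, hsqrt]
  field_simp
  ring

theorem rpow_two_thirds_lt_conjugateDepthRatio {Fr : ℝ} (hFr : 1 < Fr) :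
    Fr ^ (2 / 3 : ℝ) < conjugateDepthRatio Fr := by
  set t := Fr ^ (2 / 3 : ℝ)
  have one_lt_t : 1 < t := Real.one_lt_rpow hFr (by norm_num)
  have t_cube : t ^ 3 = Fr ^ 2 := by
    rw [← Real.rpow_mul_natCast (by positivity), ← Real.rpow_natCast]
    norm_num
  rw [lt_conjugateDepthRatio_iff (by positivity), ← t_cube]
  calc t * (t + 1) = t + t ^ 2 := by ring
    _ < t ^ 3 + t ^ 3 :=
      add_lt_add (lt_self_pow₀ one_lt_t (by norm_num)) (pow_lt_pow_right₀ one_lt_t (by norm_num))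
    _ = 2 * t ^ 3 := by ring

theorem eight_mul_sq_lt {ν : ℝ} (hν : 1 < ν) : 8 * ν ^ 2 < (ν ^ 2 + 1) * (ν + 1) ^ 2 := by
  have sq_pos : 0 < (ν - 1) ^ 2 := pow_pos (sub_pos.2 hν) 2
  calc 8 * ν ^ 2 = 2 * ν * (4 * ν) := by ring
    _ < (ν ^ 2 + 1) * (ν + 1) ^ 2 := by gcongr <;> linarith

theorem conjugateDepthRatio_lt_sq {F ν : ℝ} (hF0 : 0 ≤ F) (hF2 : F ≤ 2) (hν : 1 < ν) :
    conjugateDepthRatio (F * ν ^ 2 / (ν + 1)) < ν ^ 2 := by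
  rw [conjugateDepthRatio_lt_iff (by positivity), div_pow, ← mul_div_assoc,
    div_lt_iff₀ (by positivity)]
  calc 2 * (F * ν ^ 2) ^ 2 ≤ 2 * (2 * ν ^ 2) ^ 2 := by gcongr
    _ = ν ^ 2 * (8 * ν ^ 2) := by ring
    _ < ν ^ 2 * ((ν ^ 2 + 1) * (ν + 1) ^ 2) :=
      mul_lt_mul_of_pos_left (eight_mul_sq_lt hν) (by positivity)
    _ = ν ^ 2 * (ν ^ 2 + 1) * (ν + 1) ^ 2 := by ring

theorem one_lt_mul_sq_div_add_one_iff {F ν : ℝ} (hF : 0 < F) (hν : 0 ≤ ν) :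
    1 < F * ν ^ 2 / (ν + 1) ↔ 1 + 2 * F + √(1 + 4 * F) < 2 * F ^ 2 * ν ^ 2 := by
  set s := √(1 + 4 * F)
  have s_sq : s ^ 2 = 1 + 4 * F := Real.sq_sqrt (by positivity)
  have one_lt_s : 1 < s := Real.lt_sqrt_of_sq_lt (by linarith)
  have factor : 4 * F * (F * ν ^ 2 - (ν + 1)) = (2 * F * ν - (1 - s)) * (2 * F * ν - (1 + s)) := by
    linear_combination s_sq
  have factor_pos : 0 < 2 * F * ν - (1 - s) := by
    have := mul_nonneg hF.le hν
    linarith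
  calc 1 < F * ν ^ 2 / (ν + 1)
    _ ↔ 0 < F * ν ^ 2 - (ν + 1) := by rw [one_lt_div (by positivity), sub_pos]
    _ ↔ 1 + s < 2 * F * ν := by
      rw [← mul_pos_iff_of_pos_left (by positivity : 0 < 4 * F), factor,
        mul_pos_iff_of_pos_left factor_pos, sub_pos]
    _ ↔ (1 + s) ^ 2 < (2 * F * ν) ^ 2 :=
      (pow_lt_pow_iff_left₀ (by positivity) (by positivity) two_ne_zero).symm
    _ ↔ 1 + 2 * F + s < 2 * F ^ 2 * ν ^ 2 := by constructor <;> intro h <;> linarith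

/-- Ordering of the characteristic heights `H_R < H_s < H_* < H_L` for a discontinuous
hydraulic shock profile of the inviscid Saint-Venant equations, where `H_L = ν²H_R`,
`H_s = (Fν²/(ν+1))^{2/3} H_R` is the sonic height and `H_*` is the left limit of the
profile at its discontinuity. -/
theorem hydraulic_heights_ordering
    (F ν H_R : ℝ) (hF0 : 0 < F) (hF2 : F < 2) (hν : 1 < ν) (hHR : 0 < H_R)
    (h : 1 + 2 * F + Real.sqrt (1 + 4 * F) < 2 * F ^ 2 * ν ^ 2)
    (H_L H_s H_star : ℝ)
    (hHL : H_L = ν ^ 2 * H_R)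
    (hHs : H_s = (F * ν ^ 2 / (ν + 1)) ^ ((2 : ℝ) / 3) * H_R)
    (hHstar : H_star
      = ((-ν - 1 + Real.sqrt (8 * F ^ 2 * ν ^ 4 + ν ^ 2 + 2 * ν + 1)) / (2 * (ν + 1))) * H_R) :
    H_R < H_s ∧ H_s < H_star ∧ H_star < H_L := by
  have one_lt_froude := (one_lt_mul_sq_div_add_one_iff hF0 (by linarith)).2 h
  have hstar_eq : H_star = conjugateDepthRatio (F * ν ^ 2 / (ν + 1)) * H_R := by
    rw [hHstar, conjugateDepthRatio_div _ (by linarith)]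
    ring_nf
  rw [hHL, hHs, hstar_eq]
  refine ⟨lt_mul_of_one_lt_left hHR (Real.one_lt_rpow one_lt_froude (by norm_num)), ?_, ?_⟩
  · gcongr
    exact rpow_two_thirds_lt_conjugateDepthRatio one_lt_froude
  · gcongr
    exact conjugateDepthRatio_lt_sq hF0.le hF2.le hν
end

section
/- Let F, H_R, H_S, H_* be real numbers with F > 0, H_R > 0, H_S ≥ 0, H_* ≠ H_R, and suppose that H_S³ = F² H_R² / (1 + √H_R)² and that H_*² (√H_R + 1)² + H_* H_R (√H_R + 1)² − 2 F² H_R = 0. Define q₀ := H_S^{3/2}/F, c := √H_R + H_S^{3/2}/(F H_R), and Q_* := c H_* − q₀. Then (H_*³ − Q_*²)/(H_R − H_*) = ( (H_R + √H_R + 1)² H_* − (1 + 2F²) H_R ) / ( (√H_R + 1)² ). -/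
/-!
As a function of `H`, the discharge `Q = cH - q₀` is the line through the two equilibrium endstates
`(1, 1)` and `(H_R, H_R^(3/2))`, so the cubic `H³ - Q²` vanishes at `H = 1` and `H = H_R`; its third
root is `H_R / (√H_R + 1)²`. Dividing by `H_R - H_*` therefore leaves a quadratic in `H_*`, which
the quadratic relation for `H_*` lowers to degree one.
-/

section Field

variable {K : Type*} [Field K]

/-- The quantity being squared is, as a function of `h`, the line through `(a ^ 2, a ^ 3)` and
`(b ^ 2, b ^ 3)`, tangent to the curve `(t ^ 2, t ^ 3)` when `a = b`. -/
theorem pow_three_sub_chord_sq {a b : K} (hab : a + b ≠ 0) (h : K) :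
    h ^ 3 - ((a ^ 2 + a * b + b ^ 2) / (a + b) * h - (a * b) ^ 2 / (a + b)) ^ 2
      = (h - a ^ 2) * (h - b ^ 2) * (h - (a * b / (a + b)) ^ 2) := by
  field_simp
  ring

theorem pow_three_sub_chord_sq_div_sub {a b h : K} (hab : a + b ≠ 0) (hne : h ≠ a ^ 2) :
    (h ^ 3 - ((a ^ 2 + a * b + b ^ 2) / (a + b) * h - (a * b) ^ 2 / (a + b)) ^ 2) / (a ^ 2 - h)
      = (b ^ 2 - h) * (h - (a * b / (a + b)) ^ 2) := by
  rw [pow_three_sub_chord_sq hab, div_eq_iff (sub_ne_zero.mpr hne.symm)]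
  ring

theorem one_sub_mul_sub_sq_eq_of_quadratic {k s h : K} (hs : s + 1 ≠ 0)
    (hquad : h ^ 2 * (s + 1) ^ 2 + h * s ^ 2 * (s + 1) ^ 2 - k * s ^ 2 = 0) :
    (1 - h) * (h - (s / (s + 1)) ^ 2)
      = ((s ^ 2 + s + 1) ^ 2 * h - (1 + k) * s ^ 2) / (s + 1) ^ 2 := by
  field_simp
  linear_combination -hquad

end Field

theorem rpow_natCast_div_two_eq_of_pow_eq_sq {x y : ℝ} {n : ℕ} (hx : 0 ≤ x) (hy : 0 ≤ y)
    (h : x ^ n = y ^ 2) : x ^ ((n : ℝ) / 2) = y := by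
  rw [div_eq_mul_one_div, Real.rpow_natCast_mul hx, h, ← Real.sqrt_eq_rpow, Real.sqrt_sq hy]

section Sonic

variable {F H_R H_S : ℝ}

theorem relative_flux_eq_of_sonic (hF : 0 < F) (hHR : 0 ≤ H_R) (hHS : 0 ≤ H_S)
    (hHS3 : H_S ^ 3 = F ^ 2 * H_R ^ 2 / (1 + √H_R) ^ 2) :
    H_S ^ ((3 : ℝ) / 2) / F = H_R / (√H_R + 1) := by
  have h_sq : H_S ^ 3 = (F * (H_R / (√H_R + 1))) ^ 2 := by
    rw [hHS3, add_comm, mul_pow, div_pow, mul_div_assoc]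
  have h_rpow : H_S ^ ((3 : ℝ) / 2) = F * (H_R / (√H_R + 1)) :=
    mod_cast rpow_natCast_div_two_eq_of_pow_eq_sq hHS (by positivity) h_sq
  rw [h_rpow, mul_div_cancel_left₀ _ hF.ne']

theorem wave_speed_eq_of_sonic (hF : 0 < F) (hHR : 0 < H_R) (hHS : 0 ≤ H_S)
    (hHS3 : H_S ^ 3 = F ^ 2 * H_R ^ 2 / (1 + √H_R) ^ 2) :
    √H_R + H_S ^ ((3 : ℝ) / 2) / (F * H_R) = (H_R + √H_R + 1) / (√H_R + 1) := by
  rw [← div_div, relative_flux_eq_of_sonic hF hHR.le hHS hHS3]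
  field_simp
  linear_combination Real.sq_sqrt hHR.le

end Sonic

/-- Simplification of the ratio `(H_*³ − Q_*²)/(H_R − H_*)` in the hydraulic shock
analysis (normalized so `H_L = 1`), using the sonic relation
`H_S³ = F²H_R²/(1+√H_R)²` and the quadratic relation satisfied by `H_*`. -/
theorem hydraulic_ratio_identity
    (F H_R H_S H_star : ℝ) (hF : 0 < F) (hHR : 0 < H_R) (hHS : 0 ≤ H_S)
    (hne : H_star ≠ H_R)
    (hHS3 : H_S ^ 3 = F ^ 2 * H_R ^ 2 / (1 + Real.sqrt H_R) ^ 2)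
    (hquad : H_star ^ 2 * (Real.sqrt H_R + 1) ^ 2
        + H_star * H_R * (Real.sqrt H_R + 1) ^ 2 - 2 * F ^ 2 * H_R = 0)
    (q₀ c Q_star : ℝ)
    (hq₀ : q₀ = H_S ^ ((3 : ℝ) / 2) / F)
    (hc : c = Real.sqrt H_R + H_S ^ ((3 : ℝ) / 2) / (F * H_R))
    (hQ : Q_star = c * H_star - q₀) :
    (H_star ^ 3 - Q_star ^ 2) / (H_R - H_star)
      = ((H_R + Real.sqrt H_R + 1) ^ 2 * H_star - (1 + 2 * F ^ 2) * H_R)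
          / (Real.sqrt H_R + 1) ^ 2 := by
  rw [relative_flux_eq_of_sonic hF hHR.le hHS hHS3] at hq₀
  rw [wave_speed_eq_of_sonic hF hHR hHS hHS3] at hc
  obtain ⟨s, hs, rfl⟩ : ∃ s : ℝ, 0 < s ∧ H_R = s ^ 2 :=
    ⟨√H_R, Real.sqrt_pos.mpr hHR, (Real.sq_sqrt hHR.le).symm⟩
  rw [Real.sqrt_sq hs.le] at *
  have hs1 : s + 1 ≠ 0 := by positivity
  calc (H_star ^ 3 - Q_star ^ 2) / (s ^ 2 - H_star)
      = (1 - H_star) * (H_star - (s / (s + 1)) ^ 2) := by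
        simpa only [hQ, hc, hq₀, mul_one, one_pow] using pow_three_sub_chord_sq_div_sub hs1 hne
    _ = ((s ^ 2 + s + 1) ^ 2 * H_star - (1 + 2 * F ^ 2) * s ^ 2) / (s + 1) ^ 2 :=
        one_sub_mul_sub_sq_eq_of_quadratic hs1 hquad
end

section
/- Let δ > 0, K > 0, K₀ > 0, c₁ ∈ ℝ, and c₂ < 0 be given. Then there exists Λ > 0, depending only on δ, K, K₀, c₁, c₂, with the following property: for every s < 0, every triple of continuous functions v, q₁, q₂ : [s,0] → ℝ with |v(x)| ≤ K, q₁(x) ≤ −δ, and q₂(x) ≤ −δ for all x ∈ [s,0], every κ ∈ ℝ with |κ| ≤ K₀, every λ ≥ Λ, and every twice continuously differentiable w : [s,0] → ℂ satisfying w''(x) = −( v(x) + q₁(x) λ + q₂(x) λ² ) w(x) on [s,0] together with the boundary conditions w'(0) = (c₁ + c₂ λ) w(0) and w'(s) = κ w(s), one has w(x) = 0 for all x ∈ [s,0]. -/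
/-!
For a solution of `w'' = p w` with `k² < p`, the flux `⟪w, w' + k w⟫` has derivative
`‖w' + k w‖² + (p - k²) ‖w‖² ≥ 0`. A Robin coefficient at least `-k` at the left endpoint makes the
flux nonnegative there, and one at most `-k` at the right endpoint makes it nonpositive there; the
flux is then constant, its derivative vanishes, and so does `w`. With `k = K₀`, both
`p = -(v + q₁ λ + q₂ λ²) > K₀²` and `c₁ + c₂ λ ≤ -K₀` hold for all large `λ`, whatever `s` is.
-/

open Set Filter
open scoped RealInnerProductSpace

theorem eq_zero_of_hasDerivWithinAt_nonneg_of_le {f f' : ℝ → ℝ} {a b : ℝ} (hab : a < b)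
    (hf : ∀ x ∈ Icc a b, HasDerivWithinAt f (f' x) (Icc a b) x)
    (hf' : ∀ x ∈ Icc a b, 0 ≤ f' x) (hba : f b ≤ f a) {x : ℝ} (hx : x ∈ Icc a b) :
    f' x = 0 := by
  have hmono : MonotoneOn f (Icc a b) :=
    monotoneOn_of_hasDerivWithinAt_nonneg (convex_Icc a b)
      (fun y hy => (hf y hy).continuousWithinAt)
      (fun y hy => (hf y (interior_subset hy)).mono interior_subset)
      (fun y hy => hf' y (interior_subset hy))
  have hconst : ∀ y ∈ Icc a b, f y = f a := fun y hy =>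
    le_antisymm ((hmono hy (right_mem_Icc.2 hab.le) hy.2).trans hba)
      (hmono (left_mem_Icc.2 hab.le) hy hy.1)
  have hzero : HasDerivWithinAt f 0 (Icc a b) x :=
    (hasDerivWithinAt_const x (Icc a b) (f a)).congr hconst (hconst x hx)
  exact (uniqueDiffOn_Icc hab x hx).eq_deriv _ (hf x hx) hzero

section RobinFlux

variable {E : Type*} [NormedAddCommGroup E] [InnerProductSpace ℝ E]

/-- The flux of `w` relative to the Robin condition `w' + k w = 0`, where `w'` stands for the
derivative of `w`; it equals `e^{-2kx} (e^{2kx} ‖w‖²)' / 2`. -/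
def robinFlux (k : ℝ) (w w' : ℝ → E) (x : ℝ) : ℝ :=
  ⟪w x, w' x + k • w x⟫

theorem robinFlux_eq_of_robin {k α x : ℝ} {w w' : ℝ → E} (h : w' x = α • w x) :
    robinFlux k w w' x = (α + k) * ‖w x‖ ^ 2 := by
  rw [robinFlux, h, ← add_smul, real_inner_smul_right, real_inner_self_eq_norm_sq]

theorem hasDerivWithinAt_robinFlux {k x : ℝ} {t : Set ℝ} {w w' : ℝ → E} {w'' : E}
    (hw : HasDerivWithinAt w (w' x) t x) (hw' : HasDerivWithinAt w' w'' t x) :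
    HasDerivWithinAt (robinFlux k w w')
      (‖w' x + k • w x‖ ^ 2 + (⟪w x, w''⟫ - k ^ 2 * ‖w x‖ ^ 2)) t x := by
  refine (hw.inner ℝ (hw'.add (hw.const_smul k))).congr_deriv ?_
  simp only [Pi.add_apply, Pi.smul_apply, ← real_inner_self_eq_norm_sq, inner_add_left,
    inner_add_right, real_inner_smul_left, real_inner_smul_right, real_inner_comm (w x) (w' x)]
  ring

theorem eqOn_zero_of_robinFlux {a b k : ℝ} {w w' w'' : ℝ → E} (hab : a < b)
    (hw : ∀ x ∈ Icc a b, HasDerivWithinAt w (w' x) (Icc a b) x)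
    (hw' : ∀ x ∈ Icc a b, HasDerivWithinAt w' (w'' x) (Icc a b) x)
    (hk : ∀ x ∈ Icc a b, w x ≠ 0 → k ^ 2 * ‖w x‖ ^ 2 < ⟪w x, w'' x⟫)
    (hle : robinFlux k w w' b ≤ robinFlux k w w' a) :
    EqOn w 0 (Icc a b) := by
  have hgap : ∀ x ∈ Icc a b, 0 ≤ ⟪w x, w'' x⟫ - k ^ 2 * ‖w x‖ ^ 2 := by
    intro x hx
    rcases eq_or_ne (w x) 0 with hzero | hne
    · simp [hzero]
    · exact (sub_pos.2 (hk x hx hne)).le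
  intro x hx
  have hderiv : ‖w' x + k • w x‖ ^ 2 + (⟪w x, w'' x⟫ - k ^ 2 * ‖w x‖ ^ 2) = 0 :=
    eq_zero_of_hasDerivWithinAt_nonneg_of_le hab
      (fun y hy => hasDerivWithinAt_robinFlux (hw y hy) (hw' y hy))
      (fun y hy => add_nonneg (sq_nonneg _) (hgap y hy)) hle hx
  by_contra hne
  linarith [hk x hx hne, sq_nonneg ‖w' x + k • w x‖]

theorem eqOn_zero_of_robin {a b k α β : ℝ} {p : ℝ → ℝ} {w w' : ℝ → E} (hab : a < b)
    (hw : ∀ x ∈ Icc a b, HasDerivWithinAt w (w' x) (Icc a b) x)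
    (hw' : ∀ x ∈ Icc a b, HasDerivWithinAt w' (p x • w x) (Icc a b) x)
    (hp : ∀ x ∈ Icc a b, k ^ 2 < p x)
    (ha : w' a = α • w a) (hα : -k ≤ α) (hb : w' b = β • w b) (hβ : β ≤ -k) :
    EqOn w 0 (Icc a b) := by
  refine eqOn_zero_of_robinFlux hab hw hw' (k := k) (fun x hx hne => ?_) ?_
  · rw [real_inner_smul_right, real_inner_self_eq_norm_sq]
    exact mul_lt_mul_of_pos_right (hp x hx) (pow_pos (norm_pos_iff.2 hne) 2)
  · rw [robinFlux_eq_of_robin ha, robinFlux_eq_of_robin hb]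
    calc (β + k) * ‖w b‖ ^ 2 ≤ 0 :=
          mul_nonpos_of_nonpos_of_nonneg (by linarith) (sq_nonneg _)
      _ ≤ (α + k) * ‖w a‖ ^ 2 := mul_nonneg (by linarith) (sq_nonneg _)

end RobinFlux

theorem eventually_lt_neg_quadratic {δ : ℝ} (hδ : 0 < δ) (K M C : ℝ) :
    ∀ᶠ lam : ℝ in atTop, ∀ v q₁ q₂ : ℝ, v ≤ K → q₁ ≤ M → q₂ ≤ -δ →
      C < -(v + q₁ * lam + q₂ * lam ^ 2) := by
  filter_upwards [eventually_gt_atTop 0, eventually_gt_atTop (K + C),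
    eventually_ge_atTop ((M + 1) / δ)]
    with lam hpos hlam hδlam v q₁ q₂ hv hq₁ hq₂
  rw [div_le_iff₀' hδ] at hδlam
  calc C < lam - K := by linarith
    _ ≤ (δ * lam - M) * lam - K := by
      gcongr
      exact le_mul_of_one_le_left hpos.le (by linarith)
    _ = -(K + M * lam + -δ * lam ^ 2) := by ring
    _ ≤ -(v + q₁ * lam + q₂ * lam ^ 2) := by gcongr

theorem eventually_add_mul_le {c₂ : ℝ} (hc₂ : c₂ < 0) (c₁ C : ℝ) :
    ∀ᶠ lam : ℝ in atTop, c₁ + c₂ * lam ≤ C :=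
  (tendsto_atBot_add_const_left _ c₁
    (tendsto_id.const_mul_atTop_of_neg hc₂)).eventually_le_atBot C

theorem uniform_high_frequency_nonexistence_general
    {E : Type*} [NormedAddCommGroup E] [InnerProductSpace ℝ E]
    (δ K K₀ M c₁ c₂ : ℝ) (hδ : 0 < δ) (hc₂ : c₂ < 0) :
    ∃ Λ : ℝ, 0 < Λ ∧
      ∀ s : ℝ, s < 0 →
      ∀ v q₁ q₂ : ℝ → ℝ,
        (∀ x ∈ Icc s 0, v x ≤ K) →
        (∀ x ∈ Icc s 0, q₁ x ≤ M) →
        (∀ x ∈ Icc s 0, q₂ x ≤ -δ) →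
      ∀ κ : ℝ, -K₀ ≤ κ →
      ∀ lam : ℝ, Λ ≤ lam →
      ∀ w w' : ℝ → E,
        (∀ x ∈ Icc s 0, HasDerivWithinAt w (w' x) (Icc s 0) x) →
        (∀ x ∈ Icc s 0,
          HasDerivWithinAt w' (-(v x + q₁ x * lam + q₂ x * lam ^ 2) • w x) (Icc s 0) x) →
        w' 0 = (c₁ + c₂ * lam) • w 0 →
        w' s = κ • w s →
        ∀ x ∈ Icc s 0, w x = 0 := by
  obtain ⟨Λ, hΛ⟩ := ((eventually_gt_atTop (0 : ℝ)).and
    ((eventually_lt_neg_quadratic hδ K M (K₀ ^ 2)).and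
      (eventually_add_mul_le hc₂ c₁ (-K₀)))).exists_forall_of_atTop
  refine ⟨Λ, (hΛ Λ le_rfl).1, ?_⟩
  intro s hs v q₁ q₂ hv hq₁ hq₂ κ hκ lam hlam w w' hw hw' h0 hws
  obtain ⟨-, hpotential, hrobin⟩ := hΛ lam hlam
  exact eqOn_zero_of_robin hs hw hw'
    (fun x hx => hpotential _ _ _ (hv x hx) (hq₁ x hx) (hq₂ x hx)) hws hκ h0 hrobin

/-- Uniform high-frequency nonexistence for the quadratic pencil
`w'' = −(v + q₁λ + q₂λ²)w` with Robin conditions `w'(0) = (c₁ + c₂λ)w(0)` (`c₂ < 0`) and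
`w'(s) = κ w(s)`: there is `Λ > 0`, depending only on `δ, K, K₀, c₁, c₂`, such that for
all `s < 0`, all admissible coefficients, all `|κ| ≤ K₀`, and all `λ ≥ Λ`, the only
solution is `w ≡ 0`. -/
theorem uniform_high_frequency_nonexistence
    (δ K K₀ c₁ c₂ : ℝ) (hδ : 0 < δ) (hK : 0 < K) (hK₀ : 0 < K₀) (hc₂ : c₂ < 0) :
    ∃ Λ : ℝ, 0 < Λ ∧
      ∀ s : ℝ, s < 0 →
      ∀ v q₁ q₂ : ℝ → ℝ,
        ContinuousOn v (Set.Icc s 0) →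
        ContinuousOn q₁ (Set.Icc s 0) →
        ContinuousOn q₂ (Set.Icc s 0) →
        (∀ x ∈ Set.Icc s 0, |v x| ≤ K) →
        (∀ x ∈ Set.Icc s 0, q₁ x ≤ -δ) →
        (∀ x ∈ Set.Icc s 0, q₂ x ≤ -δ) →
      ∀ κ : ℝ, |κ| ≤ K₀ →
      ∀ lam : ℝ, Λ ≤ lam →
      ∀ w w' w'' : ℝ → ℂ,
        (∀ x ∈ Set.Icc s 0, HasDerivWithinAt w (w' x) (Set.Icc s 0) x) →
        (∀ x ∈ Set.Icc s 0, HasDerivWithinAt w' (w'' x) (Set.Icc s 0) x) →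
        ContinuousOn w'' (Set.Icc s 0) →
        (∀ x ∈ Set.Icc s 0,
          w'' x = -(((v x : ℝ) : ℂ) + ((q₁ x : ℝ) : ℂ) * (lam : ℂ)
              + ((q₂ x : ℝ) : ℂ) * (lam : ℂ) ^ 2) * w x) →
        w' 0 = ((c₁ : ℂ) + (c₂ : ℂ) * (lam : ℂ)) * w 0 →
        w' s = (κ : ℂ) * w s →
        ∀ x ∈ Set.Icc s 0, w x = 0 := by
  obtain ⟨Λ, hΛ, hzero⟩ :=
    uniform_high_frequency_nonexistence_general (E := ℂ) δ K K₀ (-δ) c₁ c₂ hδ hc₂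
  refine ⟨Λ, hΛ, fun s hs v q₁ q₂ _ _ _ hv hq₁ hq₂ κ hκ lam hlam w w' w'' hw hw' _ hode h0 hws =>
    hzero s hs v q₁ q₂ (fun x hx => (abs_le.1 (hv x hx)).2) hq₁ hq₂ κ (abs_le.1 hκ).1 lam hlam w w'
      hw (fun x hx => ?_) (by simpa using h0) (by simpa using hws)⟩
  simpa [hode x hx] using hw' x hx
end

section
/- Let b > 0 and r > 1/2 be real numbers, and let f : (0,b) → ℝ be measurable with ∫_0^b f(x)²/x dx < ∞. Then for every x ∈ (0,b) the integral ∫_x^b ξ^{−r−1} f(ξ) dξ is absolutely convergent, and ∫_0^b x^{2r−1} ( ∫_x^b ξ^{−r−1} f(ξ) dξ )² dx ≤ (1/(2r−1)) ∫_0^b f(x)²/x dx. -/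
open MeasureTheory

/-!
Apply Cauchy–Schwarz to the inner integral with respect to the measure `ξ ^ (-r - 1) dξ`, whose
mass on `(x, ∞)` is `x ^ (-r) / r`, and exchange the order of integration: the remaining integral
`∫_0^ξ x ^ (r - 1) dx = ξ ^ r / r` turns the weight `ξ ^ (-r - 1)` into `ξ⁻¹`. This gives the
constant `1 / r ^ 2` for every `r > 0`, and `1 / r ^ 2 ≤ 1 / (2 * r - 1)` because
`0 ≤ (r - 1) ^ 2`.
-/

open Set
open scoped ENNReal

section Lebesgue

lemma sq_lintegral_mul_le {α : Type*} [MeasurableSpace α] {μ : Measure α} {w g : α → ℝ≥0∞}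
    (hw : AEMeasurable w μ) (hg : AEMeasurable g μ) :
    (∫⁻ a, w a * g a ∂μ) ^ 2 ≤ (∫⁻ a, w a ∂μ) * ∫⁻ a, w a * g a ^ 2 ∂μ := by
  have sqrt_sq (t : ℝ≥0∞) : (t ^ (1 / 2 : ℝ)) ^ 2 = t := by
    rw [← ENNReal.rpow_mul_natCast]; norm_num
  have sqrt_mul_sqrt (a : α) :
      w a ^ (1 / 2 : ℝ) * (w a * g a ^ 2) ^ (1 / 2 : ℝ) = w a * g a := by
    rw [← ENNReal.mul_rpow_of_nonneg _ _ (by norm_num), ← mul_assoc, ← sq, ← mul_pow,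
      ← ENNReal.rpow_natCast_mul]
    norm_num
  calc (∫⁻ a, w a * g a ∂μ) ^ 2
      ≤ ((∫⁻ a, w a ∂μ) ^ (1 / 2 : ℝ) * (∫⁻ a, w a * g a ^ 2 ∂μ) ^ (1 / 2 : ℝ)) ^ 2 := by
        simp only [← sqrt_mul_sqrt]
        gcongr
        exact ENNReal.lintegral_mul_norm_pow_le hw (hw.mul (hg.pow_const 2)) (by norm_num)
          (by norm_num) (by norm_num)
    _ = (∫⁻ a, w a ∂μ) * ∫⁻ a, w a * g a ^ 2 ∂μ := by simp only [mul_pow, sqrt_sq]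

lemma setLIntegral_Ioo_mul_setLIntegral_Ioo_swap {α : Type*} [LinearOrder α] [TopologicalSpace α]
    [OrderClosedTopology α] [SecondCountableTopology α] [MeasurableSpace α]
    [OpensMeasurableSpace α] {μ : Measure α} [SFinite μ] {a b : α} {u v : α → ℝ≥0∞}
    (hu : AEMeasurable u (μ.restrict (Ioo a b))) (hv : AEMeasurable v (μ.restrict (Ioo a b))) :
    ∫⁻ x in Ioo a b, u x * ∫⁻ y in Ioo x b, v y ∂μ ∂μ =
      ∫⁻ y in Ioo a b, (∫⁻ x in Ioo a y, u x ∂μ) * v y ∂μ := by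
  let K (p : α × α) : ℝ≥0∞ := {p : α × α | p.1 < p.2}.indicator (fun p ↦ u p.1 * v p.2) p
  have hK : AEMeasurable K ((μ.restrict (Ioo a b)).prod (μ.restrict (Ioo a b))) :=
    (hu.comp_fst.mul hv.comp_snd).indicator (measurableSet_lt measurable_fst measurable_snd)
  have slice_left (x) (hx : x ∈ Ioo a b) :
      u x * ∫⁻ y in Ioo x b, v y ∂μ = ∫⁻ y in Ioo a b, K (x, y) ∂μ := by
    have hset : Ioi x ∩ Ioo a b = Ioo x b := by grind
    calc u x * ∫⁻ y in Ioo x b, v y ∂μ = ∫⁻ y in Ioo x b, u x * v y ∂μ :=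
          (lintegral_const_mul'' _ (hv.mono_set (Ioo_subset_Ioo_left hx.1.le))).symm
      _ = ∫⁻ y in Ioo a b, (Ioi x).indicator (fun y ↦ u x * v y) y ∂μ := by
          rw [setLIntegral_indicator measurableSet_Ioi, hset]
      _ = ∫⁻ y in Ioo a b, K (x, y) ∂μ := rfl
  have slice_right (y) (hy : y ∈ Ioo a b) :
      ∫⁻ x in Ioo a b, K (x, y) ∂μ = (∫⁻ x in Ioo a y, u x ∂μ) * v y := by
    have hset : Iio y ∩ Ioo a b = Ioo a y := by grind
    calc ∫⁻ x in Ioo a b, K (x, y) ∂μ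
        = ∫⁻ x in Ioo a b, (Iio y).indicator (fun x ↦ u x * v y) x ∂μ := rfl
      _ = ∫⁻ x in Ioo a y, u x * v y ∂μ := by
          rw [setLIntegral_indicator measurableSet_Iio, hset]
      _ = (∫⁻ x in Ioo a y, u x ∂μ) * v y :=
          lintegral_mul_const'' _ (hu.mono_set (Ioo_subset_Ioo_right hy.2.le))
  rw [setLIntegral_congr_fun measurableSet_Ioo slice_left,
    ← setLIntegral_congr_fun measurableSet_Ioo slice_right]
  exact lintegral_lintegral_swap hK

lemma integrable_and_integral_le_of_lintegral_ofReal_le {α : Type*} [MeasurableSpace α]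
    {μ : Measure α} {F : α → ℝ} {c : ℝ} (hF : AEStronglyMeasurable F μ) (hF₀ : 0 ≤ᵐ[μ] F)
    (hc : 0 ≤ c) (h : ∫⁻ a, ENNReal.ofReal (F a) ∂μ ≤ ENNReal.ofReal c) :
    Integrable F μ ∧ ∫ a, F a ∂μ ≤ c := by
  refine ⟨(lintegral_ofReal_ne_top_iff_integrable hF hF₀).1 (h.trans_lt ENNReal.ofReal_lt_top).ne,
    ?_⟩
  rw [integral_eq_lintegral_of_nonneg_ae hF₀ hF]
  exact ENNReal.toReal_le_of_le_ofReal hc h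

lemma aestronglyMeasurable_setIntegral_Ioo_left {E : Type*} [NormedAddCommGroup E]
    [NormedSpace ℝ E] {a b : ℝ} {h : ℝ → E}
    (hh : AEStronglyMeasurable h (volume.restrict (Ioo a b))) :
    AEStronglyMeasurable (fun x ↦ ∫ y in Ioo x b, h y) (volume.restrict (Ioo a b)) := by
  have hK : AEStronglyMeasurable ({p : ℝ × ℝ | p.1 < p.2}.indicator fun p ↦ h p.2)
      ((volume.restrict (Ioo a b)).prod (volume.restrict (Ioo a b))) :=
    hh.comp_snd.indicator (measurableSet_lt measurable_fst measurable_snd)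
  refine hK.integral_prod_right'.congr ?_
  filter_upwards [ae_restrict_mem measurableSet_Ioo] with x hx
  have hset : Ioo a b ∩ Ioi x = Ioo x b := by grind
  calc _ = ∫ y in Ioo a b, (Ioi x).indicator h y := rfl
    _ = ∫ y in Ioo x b, h y := by rw [setIntegral_indicator measurableSet_Ioi, hset]

end Lebesgue

section Power

variable {r : ℝ}

lemma lintegral_Ioi_rpow_neg_sub_one (hr : 0 < r) {x : ℝ} (hx : 0 < x) :
    ∫⁻ ξ in Ioi x, ENNReal.ofReal (ξ ^ (-r - 1)) = ENNReal.ofReal (x ^ (-r) / r) := by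
  rw [← ofReal_integral_eq_lintegral_ofReal (integrableOn_Ioi_rpow_of_lt (by linarith) hx),
    integral_Ioi_rpow_of_lt (by linarith) hx, sub_add_cancel, neg_div_neg_eq]
  filter_upwards [ae_restrict_mem measurableSet_Ioi] with ξ hξ
  exact Real.rpow_nonneg (hx.trans hξ).le _

lemma lintegral_Ioo_rpow_sub_one (hr : 0 < r) {ξ : ℝ} (hξ : 0 ≤ ξ) :
    ∫⁻ x in Ioo 0 ξ, ENNReal.ofReal (x ^ (r - 1)) = ENNReal.ofReal (ξ ^ r / r) := by
  have hint : IntegrableOn (fun x : ℝ ↦ x ^ (r - 1)) (Ioo 0 ξ) :=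
    (intervalIntegrable_iff_integrableOn_Ioo_of_le hξ).1
      (intervalIntegral.intervalIntegrable_rpow' (by linarith))
  rw [← ofReal_integral_eq_lintegral_ofReal hint, ← integral_Ioc_eq_integral_Ioo,
    ← intervalIntegral.integral_of_le hξ, integral_rpow (.inl (by linarith)), sub_add_cancel,
    Real.zero_rpow hr.ne', sub_zero]
  filter_upwards [ae_restrict_mem measurableSet_Ioo] with x hx
  exact Real.rpow_nonneg hx.1.le _

lemma one_div_sq_le_one_div_two_mul_sub_one (hr : 1 / 2 < r) :
    1 / r ^ 2 ≤ 1 / (2 * r - 1) :=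
  one_div_le_one_div_of_le (by linarith) (by nlinarith [sq_nonneg (r - 1)])

end Power

section Hardy

variable {b r : ℝ} {g : ℝ → ℝ≥0∞}

lemma sq_lintegral_Ioo_rpow_mul_le (hr : 0 < r) {x : ℝ} (hx : 0 < x)
    (hg : AEMeasurable g (volume.restrict (Ioo x b))) :
    (∫⁻ ξ in Ioo x b, ENNReal.ofReal (ξ ^ (-r - 1)) * g ξ) ^ 2 ≤
      ENNReal.ofReal (x ^ (-r) / r) *
        ∫⁻ ξ in Ioo x b, ENNReal.ofReal (ξ ^ (-r - 1)) * g ξ ^ 2 := by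
  grw [sq_lintegral_mul_le (by fun_prop) hg, ← lintegral_Ioi_rpow_neg_sub_one hr hx,
    lintegral_mono_set (Ioo_subset_Ioi_self : Ioo x b ⊆ Ioi x)]

lemma lintegral_Ioo_rpow_mul_lt_top (hr : 0 < r) {x : ℝ} (hx : 0 < x)
    (hg : AEMeasurable g (volume.restrict (Ioo x b)))
    (hfin : ∫⁻ ξ in Ioo x b, ENNReal.ofReal ξ⁻¹ * g ξ ^ 2 < ∞) :
    ∫⁻ ξ in Ioo x b, ENNReal.ofReal (ξ ^ (-r - 1)) * g ξ < ∞ := by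
  have hweight (ξ) (hξ : ξ ∈ Ioo x b) : ξ ^ (-r - 1) ≤ x ^ (-r) * ξ⁻¹ := by
    have hξ₀ : 0 < ξ := hx.trans hξ.1
    rw [Real.rpow_sub_one hξ₀.ne', div_eq_mul_inv]
    gcongr ?_ * _
    exact Real.rpow_le_rpow_of_nonpos hx hξ.1.le (by linarith)
  have hsq : ∫⁻ ξ in Ioo x b, ENNReal.ofReal (ξ ^ (-r - 1)) * g ξ ^ 2 < ∞ := by
    calc ∫⁻ ξ in Ioo x b, ENNReal.ofReal (ξ ^ (-r - 1)) * g ξ ^ 2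
        ≤ ∫⁻ ξ in Ioo x b, ENNReal.ofReal (x ^ (-r)) * (ENNReal.ofReal ξ⁻¹ * g ξ ^ 2) := by
          refine setLIntegral_mono' measurableSet_Ioo fun ξ hξ ↦ ?_
          grw [hweight ξ hξ, ENNReal.ofReal_mul (by positivity), mul_assoc]
      _ = ENNReal.ofReal (x ^ (-r)) * ∫⁻ ξ in Ioo x b, ENNReal.ofReal ξ⁻¹ * g ξ ^ 2 :=
          lintegral_const_mul' _ _ ENNReal.ofReal_ne_top
      _ < ∞ := ENNReal.mul_lt_top ENNReal.ofReal_lt_top hfin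
  have hpow := (sq_lintegral_Ioo_rpow_mul_le hr hx hg).trans_lt
    (ENNReal.mul_lt_top ENNReal.ofReal_lt_top hsq)
  exact (ENNReal.pow_lt_top_iff.1 hpow).resolve_right two_ne_zero

theorem lintegral_rpow_mul_sq_lintegral_Ioo_le (hr : 0 < r)
    (hg : AEMeasurable g (volume.restrict (Ioo 0 b))) :
    ∫⁻ x in Ioo 0 b, ENNReal.ofReal (x ^ (2 * r - 1)) *
        (∫⁻ ξ in Ioo x b, ENNReal.ofReal (ξ ^ (-r - 1)) * g ξ) ^ 2 ≤
      ENNReal.ofReal (1 / r ^ 2) * ∫⁻ ξ in Ioo 0 b, ENNReal.ofReal ξ⁻¹ * g ξ ^ 2 := by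
  have outer_weight (x) (hx : 0 < x) : ENNReal.ofReal (x ^ (2 * r - 1)) *
      ENNReal.ofReal (x ^ (-r) / r) = ENNReal.ofReal r⁻¹ * ENNReal.ofReal (x ^ (r - 1)) := by
    rw [← ENNReal.ofReal_mul (by positivity), ← ENNReal.ofReal_mul (by positivity),
      show r - 1 = 2 * r - 1 + -r by ring, Real.rpow_add hx]
    ring_nf
  have inner_weight (ξ) (hξ : 0 < ξ) : ENNReal.ofReal r⁻¹ * (ENNReal.ofReal (ξ ^ r / r) *
      ENNReal.ofReal (ξ ^ (-r - 1))) = ENNReal.ofReal (1 / r ^ 2) * ENNReal.ofReal ξ⁻¹ := by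
    rw [← ENNReal.ofReal_mul (by positivity), ← ENNReal.ofReal_mul (by positivity),
      ← ENNReal.ofReal_mul (by positivity), Real.rpow_sub_one hξ.ne', Real.rpow_neg hξ.le]
    field_simp
  calc ∫⁻ x in Ioo 0 b, ENNReal.ofReal (x ^ (2 * r - 1)) *
        (∫⁻ ξ in Ioo x b, ENNReal.ofReal (ξ ^ (-r - 1)) * g ξ) ^ 2
      ≤ ∫⁻ x in Ioo 0 b, ENNReal.ofReal r⁻¹ * (ENNReal.ofReal (x ^ (r - 1)) *
          ∫⁻ ξ in Ioo x b, ENNReal.ofReal (ξ ^ (-r - 1)) * g ξ ^ 2) := by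
        refine setLIntegral_mono' measurableSet_Ioo fun x hx ↦ ?_
        grw [sq_lintegral_Ioo_rpow_mul_le hr hx.1 (hg.mono_set (Ioo_subset_Ioo_left hx.1.le)),
          ← mul_assoc, outer_weight x hx.1, mul_assoc]
    _ = ENNReal.ofReal r⁻¹ * ∫⁻ ξ in Ioo 0 b, (∫⁻ x in Ioo 0 ξ, ENNReal.ofReal (x ^ (r - 1))) *
          (ENNReal.ofReal (ξ ^ (-r - 1)) * g ξ ^ 2) := by
        rw [lintegral_const_mul' _ _ ENNReal.ofReal_ne_top,
          setLIntegral_Ioo_mul_setLIntegral_Ioo_swap (by fun_prop) (by fun_prop)]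
    _ = ∫⁻ ξ in Ioo 0 b, ENNReal.ofReal (1 / r ^ 2) * (ENNReal.ofReal ξ⁻¹ * g ξ ^ 2) := by
        rw [← lintegral_const_mul' _ _ ENNReal.ofReal_ne_top]
        refine setLIntegral_congr_fun measurableSet_Ioo fun ξ hξ ↦ ?_
        simp only [lintegral_Ioo_rpow_sub_one hr hξ.1.le, ← mul_assoc, ← inner_weight ξ hξ.1]
    _ = ENNReal.ofReal (1 / r ^ 2) * ∫⁻ ξ in Ioo 0 b, ENNReal.ofReal ξ⁻¹ * g ξ ^ 2 :=
        lintegral_const_mul' _ _ ENNReal.ofReal_ne_top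

end Hardy

section NormedSpace

variable {E : Type*} [NormedAddCommGroup E] {b r : ℝ} {f : ℝ → E}

lemma lintegral_inv_mul_enorm_sq_eq_ofReal_integral
    (hint : IntegrableOn (fun x ↦ ‖f x‖ ^ 2 / x) (Ioo 0 b)) :
    ∫⁻ x in Ioo 0 b, ENNReal.ofReal x⁻¹ * ‖f x‖ₑ ^ 2 =
      ENNReal.ofReal (∫ x in Ioo 0 b, ‖f x‖ ^ 2 / x) := by
  rw [ofReal_integral_eq_lintegral_ofReal hint]
  · refine setLIntegral_congr_fun measurableSet_Ioo fun x hx ↦ ?_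
    rw [div_eq_inv_mul, ENNReal.ofReal_mul (inv_nonneg.2 hx.1.le),
      ENNReal.ofReal_pow (norm_nonneg _), ofReal_norm]
  · filter_upwards [ae_restrict_mem measurableSet_Ioo] with x hx
    exact div_nonneg (sq_nonneg _) hx.1.le

variable [NormedSpace ℝ E]

lemma lintegral_Ioo_enorm_rpow_smul {x : ℝ} (hx : 0 ≤ x) (s : ℝ) :
    ∫⁻ ξ in Ioo x b, ‖ξ ^ s • f ξ‖ₑ = ∫⁻ ξ in Ioo x b, ENNReal.ofReal (ξ ^ s) * ‖f ξ‖ₑ := by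
  refine setLIntegral_congr_fun measurableSet_Ioo fun ξ hξ ↦ ?_
  rw [enorm_smul, Real.enorm_eq_ofReal (Real.rpow_nonneg (hx.trans hξ.1.le) _)]

lemma integrableOn_Ioo_rpow_smul (hr : 0 < r)
    (hf : AEStronglyMeasurable f (volume.restrict (Ioo 0 b)))
    (hint : IntegrableOn (fun x ↦ ‖f x‖ ^ 2 / x) (Ioo 0 b)) {x : ℝ} (hx : 0 < x) :
    IntegrableOn (fun ξ ↦ ξ ^ (-r - 1) • f ξ) (Ioo x b) := by
  have hsub : Ioo x b ⊆ Ioo 0 b := Ioo_subset_Ioo_left hx.le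
  have hfx := hf.mono_set hsub
  refine ⟨AEStronglyMeasurable.smul (by fun_prop) hfx, ?_⟩
  rw [hasFiniteIntegral_iff_enorm, lintegral_Ioo_enorm_rpow_smul hx.le]
  refine lintegral_Ioo_rpow_mul_lt_top hr hx hfx.enorm ((lintegral_mono_set hsub).trans_lt ?_)
  rw [lintegral_inv_mul_enorm_sq_eq_ofReal_integral hint]
  exact ENNReal.ofReal_lt_top

lemma lintegral_ofReal_rpow_mul_norm_sq_integral_Ioo_le (hr : 0 < r)
    (hf : AEStronglyMeasurable f (volume.restrict (Ioo 0 b)))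
    (hint : IntegrableOn (fun x ↦ ‖f x‖ ^ 2 / x) (Ioo 0 b)) :
    ∫⁻ x in Ioo 0 b,
        ENNReal.ofReal (x ^ (2 * r - 1) * ‖∫ ξ in Ioo x b, ξ ^ (-r - 1) • f ξ‖ ^ 2) ≤
      ENNReal.ofReal (1 / r ^ 2 * ∫ x in Ioo 0 b, ‖f x‖ ^ 2 / x) := by
  rw [ENNReal.ofReal_mul (by positivity), ← lintegral_inv_mul_enorm_sq_eq_ofReal_integral hint]
  refine le_trans ?_ (lintegral_rpow_mul_sq_lintegral_Ioo_le hr hf.enorm)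
  refine setLIntegral_mono' measurableSet_Ioo fun x hx ↦ ?_
  rw [ENNReal.ofReal_mul (Real.rpow_nonneg hx.1.le _), ENNReal.ofReal_pow (norm_nonneg _),
    ofReal_norm, ← lintegral_Ioo_enorm_rpow_smul hx.1.le]
  gcongr
  exact enorm_integral_le_lintegral_enorm _

theorem weighted_hardy_dominant_general [CompleteSpace E] (hr : 0 < r)
    (hf : AEStronglyMeasurable f (volume.restrict (Ioo 0 b)))
    (hint : IntegrableOn (fun x ↦ ‖f x‖ ^ 2 / x) (Ioo 0 b)) :
    (∀ x ∈ Ioo 0 b, IntegrableOn (fun ξ ↦ ξ ^ (-r - 1) • f ξ) (Ioo x b)) ∧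
      IntegrableOn (fun x ↦ x ^ (2 * r - 1) * ‖∫ ξ in Ioo x b, ξ ^ (-r - 1) • f ξ‖ ^ 2)
        (Ioo 0 b) ∧
      ∫ x in Ioo 0 b, x ^ (2 * r - 1) * ‖∫ ξ in Ioo x b, ξ ^ (-r - 1) • f ξ‖ ^ 2 ≤
        1 / r ^ 2 * ∫ x in Ioo 0 b, ‖f x‖ ^ 2 / x := by
  have hmeas : AEStronglyMeasurable (fun x ↦ ∫ ξ in Ioo x b, ξ ^ (-r - 1) • f ξ)
      (volume.restrict (Ioo 0 b)) :=
    aestronglyMeasurable_setIntegral_Ioo_left (AEStronglyMeasurable.smul (by fun_prop) hf)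
  refine ⟨fun x hx ↦ integrableOn_Ioo_rpow_smul hr hf hint hx.1,
    integrable_and_integral_le_of_lintegral_ofReal_le
      (AEStronglyMeasurable.mul (by fun_prop) (hmeas.norm.pow 2)) ?_ ?_
      (lintegral_ofReal_rpow_mul_norm_sq_integral_Ioo_le hr hf hint)⟩
  · filter_upwards [ae_restrict_mem measurableSet_Ioo] with x hx
    exact mul_nonneg (Real.rpow_nonneg hx.1.le _) (sq_nonneg _)
  · exact mul_nonneg (by positivity) <| setIntegral_nonneg measurableSet_Ioo fun x hx ↦
      div_nonneg (sq_nonneg _) hx.1.le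

end NormedSpace

/-- Weighted Hardy-type inequality at a regular singular point (dominant solution):
for `r > 1/2` and `∫_0^b f²/x dx < ∞`, the inner integrals `∫_x^b ξ^{−r−1} f(ξ) dξ`
converge absolutely for every `x ∈ (0,b)`, and
`∫_0^b x^{2r−1} (∫_x^b ξ^{−r−1} f dξ)² dx ≤ (1/(2r−1)) ∫_0^b f²/x dx`. -/
theorem weighted_hardy_dominant
    (b r : ℝ) (hb : 0 < b) (hr : 1 / 2 < r)
    (f : ℝ → ℝ) (hf : Measurable f)
    (hint : IntegrableOn (fun x => f x ^ 2 / x) (Set.Ioo 0 b)) :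
    (∀ x ∈ Set.Ioo 0 b,
        IntegrableOn (fun ξ => ξ ^ (-r - 1) * f ξ) (Set.Ioo x b))
    ∧ (∫ x in Set.Ioo 0 b,
          x ^ (2 * r - 1) * (∫ ξ in Set.Ioo x b, ξ ^ (-r - 1) * f ξ) ^ 2)
        ≤ (1 / (2 * r - 1)) * ∫ x in Set.Ioo 0 b, f x ^ 2 / x := by
  obtain ⟨hinner, -, hle⟩ := weighted_hardy_dominant_general (b := b) (by linarith : 0 < r)
    hf.aestronglyMeasurable (by simpa only [Real.norm_eq_abs, sq_abs] using hint)
  simp only [smul_eq_mul, Real.norm_eq_abs, sq_abs] at hinner hle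
  exact ⟨hinner, hle.trans <|
    mul_le_mul_of_nonneg_right (one_div_sq_le_one_div_two_mul_sub_one hr) <|
    setIntegral_nonneg measurableSet_Ioo fun x hx ↦ div_nonneg (sq_nonneg _) hx.1.le⟩
end
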